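/- arXiv:1710.03665 — 2 statements merged into one kernel-verified Lean document; each statement's English description precedes it below -/
import Mathlib

section
/- For every dimension n ≥ 1 there exists a net (ψ_ε)_{ε∈(0,1]} of smooth compactly supported functions ψ_ε : ℝⁿ → ℝ with the following properties: (i) supp ψ_ε is contained in the closed unit ball for every ε; (ii) ∫_{ℝⁿ} ψ_ε(x) dx = 1 for every ε; (iii) for every multi-index α there exists p ∈ ℝ such that sup_{x∈ℝⁿ} |∂^α ψ_ε(x)| = O(ε^{−p}) as ε → 0⁺; (iv) for every j ∈ ℕ there exists ε₀ ∈ (0,1] such that for every multi-index α with 1 ≤ |α| ≤ j and every ε ≤ ε₀ one has ∫_{ℝⁿ} x^α ψ_ε(x) dx = 0; (v) for every ν > 0 there exists ε₀ ∈ (0,1] such that ∫_{ℝⁿ} |ψ_ε(x)| dx ≤ 1 + ν for all ε ≤ ε₀. -/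
open MeasureTheory Filter Topology

/-- The partial derivative of a scalar function on ℝⁿ in the `i`-th coordinate direction. -/
noncomputable def pderiv1 {n : ℕ} (i : Fin n) (f : EuclideanSpace ℝ (Fin n) → ℝ) :
    EuclideanSpace ℝ (Fin n) → ℝ :=
  fun x => fderiv ℝ f x (EuclideanSpace.single i 1)

/-- The iterated partial derivative `∂^α` for a multi-index `α : Fin n → ℕ`. -/
noncomputable def mpderiv {n : ℕ} (α : Fin n → ℕ) (f : EuclideanSpace ℝ (Fin n) → ℝ) :
    EuclideanSpace ℝ (Fin n) → ℝ :=
  (List.finRange n).foldr (fun i g => (pderiv1 i)^[α i] g) f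

open scoped ContDiff

/-- Smooth compactly supported functions. -/
def GoodFun {n : ℕ} (f : EuclideanSpace ℝ (Fin n) → ℝ) : Prop :=
  ContDiff ℝ (⊤ : ℕ∞) f ∧ HasCompactSupport f

lemma GoodFun.pderiv {n : ℕ} {f : EuclideanSpace ℝ (Fin n) → ℝ} (hf : GoodFun f) (i : Fin n) :
    GoodFun (pderiv1 i f) := by
  refine ⟨?_, hf.2.fderiv_apply (𝕜 := ℝ) _⟩
  have h : ContDiff ℝ (⊤ : ℕ∞) (fderiv ℝ f) := hf.1.fderiv_right (by norm_cast)
  exact h.clm_apply contDiff_const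

lemma GoodFun.iter {n : ℕ} {f : EuclideanSpace ℝ (Fin n) → ℝ} (hf : GoodFun f) (i : Fin n)
    (k : ℕ) : GoodFun ((pderiv1 i)^[k] f) := by
  induction k with
  | zero => exact hf
  | succ k ih => rw [Function.iterate_succ_apply']; exact ih.pderiv i

lemma GoodFun.mp {n : ℕ} {f : EuclideanSpace ℝ (Fin n) → ℝ} (hf : GoodFun f) (α : Fin n → ℕ) :
    GoodFun (mpderiv α f) := by
  unfold mpderiv
  induction List.finRange n with
  | nil => exact hf
  | cons i l ih => exact ih.iter i _

lemma GoodFun.bdd {n : ℕ} {f : EuclideanSpace ℝ (Fin n) → ℝ} (hf : GoodFun f) :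
    ∃ C, ∀ x, |f x| ≤ C := by
  obtain ⟨C, hC⟩ := hf.2.exists_bound_of_continuous hf.1.continuous
  exact ⟨C, fun x => hC x⟩

lemma GoodFun.bdd_all {n : ℕ} {f : EuclideanSpace ℝ (Fin n) → ℝ} (hf : GoodFun f) (m : ℕ) :
    ∃ C, ∀ α : Fin n → ℕ, (∀ i, α i ≤ m) → ∀ x, |mpderiv α f x| ≤ C := by
  choose C hC using fun α => (hf.mp α).bdd
  have hfin : (Set.Iic (fun _ : Fin n => m)).Finite := Set.finite_Iic _
  obtain ⟨D, hD⟩ := (hfin.image C).bddAbove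
  exact ⟨D, fun α hα x => (hC α x).trans (hD ⟨α, hα, rfl⟩)⟩

lemma exists_slow (B : ℕ → ℝ) : ∃ m : ℝ → ℕ, ∀ K : ℕ, ∃ ε₀ ∈ Set.Ioc (0:ℝ) 1, ∀ ε : ℝ,
    0 < ε → ε ≤ ε₀ → K ≤ m ε ∧ B (m ε) ≤ ε⁻¹ := by
  classical
  refine ⟨fun ε => Nat.findGreatest (fun k => ∀ l ≤ k, B l ≤ ε⁻¹) ⌊ε⁻¹⌋₊, fun K => ?_⟩
  set S : ℝ := K + 1 + ∑ l ∈ Finset.range (K + 1), |B l| with hS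
  have h0 : 0 ≤ ∑ l ∈ Finset.range (K + 1), |B l| := Finset.sum_nonneg fun _ _ => abs_nonneg _
  have hK : (0:ℝ) ≤ K := K.cast_nonneg
  have hS1 : 1 ≤ S := by linarith
  refine ⟨S⁻¹, ⟨by positivity, inv_le_one_of_one_le₀ hS1⟩, fun ε he hle => ?_⟩
  have hSe : S ≤ ε⁻¹ := by
    rw [le_inv_comm₀ (by linarith) he]; exact hle
  have hP : ∀ l ≤ K, B l ≤ ε⁻¹ := by
    intro l hl
    have := Finset.single_le_sum (f := fun l => |B l|) (fun _ _ => abs_nonneg _)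
      (Finset.mem_range.2 (Nat.lt_succ_of_le hl))
    have := le_abs_self (B l)
    linarith
  have hKf : K ≤ ⌊ε⁻¹⌋₊ := Nat.le_floor (by linarith)
  exact ⟨Nat.le_findGreatest hKf hP, Nat.findGreatest_spec (P := fun k => ∀ l ≤ k, B l ≤ ε⁻¹) hKf hP _ le_rfl⟩

lemma integral_scale {n : ℕ} (F : EuclideanSpace ℝ (Fin n) → ℝ) {r : ℝ} (hr : 0 < r) :
    ∫ x, (r ^ n)⁻¹ * F (r⁻¹ • x) = ∫ x, F x := by
  rw [integral_const_mul, Measure.integral_comp_inv_smul]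
  simp only [finrank_euclideanSpace, Fintype.card_fin, smul_eq_mul]
  rw [abs_of_pos (by positivity), ← mul_assoc, inv_mul_cancel₀ (by positivity), one_mul]

lemma moment_scale {n : ℕ} (F : EuclideanSpace ℝ (Fin n) → ℝ) {r : ℝ} (hr : 0 < r)
    (α : Fin n → ℕ) :
    ∫ x, (∏ i, x i ^ α i) * ((r ^ n)⁻¹ * F (r⁻¹ • x)) =
      r ^ (∑ i, α i) * ∫ x, (∏ i, x i ^ α i) * F x := by
  rw [← integral_const_mul, 
    ← integral_scale (fun x => r ^ (∑ i, α i) * ((∏ i, x i ^ α i) * F x)) hr]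
  congr 1; ext x
  simp only [PiLp.smul_apply, smul_eq_mul, mul_pow, Finset.prod_mul_distrib,
    Finset.prod_pow_eq_pow_sum]
  rw [inv_pow]
  have : r ^ (∑ i, α i) ≠ 0 := by positivity
  field_simp

lemma exists_pre (n : ℕ) (m : ℕ) : ∀ ν : ℝ, 0 < ν → ∃ φ : EuclideanSpace ℝ (Fin n) → ℝ,
    GoodFun φ ∧ Function.support φ ⊆ Metric.closedBall 0 1 ∧ ∫ x, φ x = 1 ∧
    (∀ α : Fin n → ℕ, 1 ≤ (∑ i, α i) → (∑ i, α i) ≤ m → ∫ x, (∏ i, x i ^ α i) * φ x = 0) ∧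
    ∫ x, |φ x| < 1 + ν := by
  induction m with
  | zero =>
    intro ν hν
    let b : ContDiffBump (0 : EuclideanSpace ℝ (Fin n)) := ⟨1/2, 1, by norm_num, by norm_num⟩
    refine ⟨b.normed volume, ⟨b.contDiff_normed, b.hasCompactSupport_normed⟩, ?_,
      b.integral_normed, fun α h1 h2 => by omega, ?_⟩
    · rw [b.support_normed_eq]; exact Metric.ball_subset_closedBall
    · simp_rw [abs_of_nonneg (b.nonneg_normed _)]
      rw [b.integral_normed]; linarith
  | succ m ih =>
    intro ν hν
    obtain ⟨φ, hg, hs, h1, hm, hL⟩ := ih ν hν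
    set L := ∫ x, |φ x| with hLdef
    have hlim : Tendsto (fun r : ℝ => (1 - r ^ (m+1))⁻¹ * (L + r ^ (m+1) * L)) (𝓝[>] 0) (𝓝 L) := by
      have : ContinuousAt (fun r : ℝ => (1 - r ^ (m+1))⁻¹ * (L + r ^ (m+1) * L)) 0 := by
        apply ContinuousAt.mul
        · apply ContinuousAt.inv₀ (by fun_prop); simp
        · fun_prop
      have h := this.tendsto
      simp at h
      exact h.mono_left nhdsWithin_le_nhds
    obtain ⟨r, hrL, hr0, hr1⟩ := ((hlim.eventually_lt_const hL).and
      (Ioo_mem_nhdsGT (zero_lt_one' ℝ))).exists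
    set q := r ^ (m+1) with hq
    have hq0 : 0 < q := by positivity
    have hq1 : q < 1 := pow_lt_one₀ hr0.le hr1 (by omega)
    have hq' : 0 < 1 - q := by linarith
    set φr : EuclideanSpace ℝ (Fin n) → ℝ := fun x => (r ^ n)⁻¹ * φ (r⁻¹ • x) with hφr
    have hsr : Function.support φr ⊆ Metric.closedBall 0 1 := by
      intro x hx
      have : r⁻¹ • x ∈ Metric.closedBall (0 : EuclideanSpace ℝ (Fin n)) 1 := by
        apply hs
        intro h; apply hx; simp [hφr, h]
      rw [mem_closedBall_zero_iff, norm_smul, norm_inv, Real.norm_of_nonneg hr0.le,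
        inv_mul_le_iff₀ hr0] at this
      rw [mem_closedBall_zero_iff]; linarith
    have hcr : HasCompactSupport φr :=
      HasCompactSupport.of_support_subset_isCompact (isCompact_closedBall _ _) hsr
    have hdr : ContDiff ℝ (⊤ : ℕ∞) φr :=
      contDiff_const.mul (hg.1.comp (contDiff_const_smul _))
    have hsφ : Function.support (fun x => (1 - q)⁻¹ * (φr x - q * φ x)) ⊆
        Metric.closedBall 0 1 := by
      intro x hx
      by_contra hc
      have e1 : φ x = 0 := by_contra fun h => hc (hs h)
      have e2 : φr x = 0 := by_contra fun h => hc (hsr h)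
      apply hx; simp [e1, e2]
    have hint : ∀ α : Fin n → ℕ, ∀ f : EuclideanSpace ℝ (Fin n) → ℝ, Continuous f →
        HasCompactSupport f → Integrable (fun x => (∏ i, x i ^ α i) * f x) := by
      intro α f hf hc
      refine Continuous.integrable_of_hasCompactSupport (by fun_prop) hc.mul_left
    have hmom : ∀ α : Fin n → ℕ, ∫ x, (∏ i, x i ^ α i) * ((1 - q)⁻¹ * (φr x - q * φ x)) =
        (1 - q)⁻¹ * (r ^ (∑ i, α i) - q) * ∫ x, (∏ i, x i ^ α i) * φ x := by
      intro α
      have : ∀ x : EuclideanSpace ℝ (Fin n),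
        (∏ i, x i ^ α i) * ((1 - q)⁻¹ * (φr x - q * φ x)) =
        (1 - q)⁻¹ * ((∏ i, x i ^ α i) * φr x - q * ((∏ i, x i ^ α i) * φ x)) := by
        intro x; ring
      simp_rw [this]
      rw [integral_const_mul, integral_sub (hint α φr hdr.continuous hcr)
        ((hint α φ hg.1.continuous hg.2).const_mul q), integral_const_mul, moment_scale φ hr0]
      ring
    refine ⟨fun x => (1 - q)⁻¹ * (φr x - q * φ x), ⟨?_, ?_⟩, hsφ, ?_, ?_, ?_⟩
    · exact contDiff_const.mul (hdr.sub (contDiff_const.mul hg.1))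
    · exact HasCompactSupport.of_support_subset_isCompact (isCompact_closedBall _ _) hsφ
    · have := hmom 0
      simp only [Pi.zero_apply, pow_zero, Finset.prod_const_one, one_mul, Finset.sum_const_zero,
        h1, mul_one] at this
      rw [this, inv_mul_cancel₀ hq'.ne']
    · intro α ha1 ha2
      rw [hmom]
      rcases Nat.lt_or_ge m (∑ i, α i) with h | h
      · have : ∑ i, α i = m + 1 := by omega
        rw [this, ← hq]; simp
      · rw [hm α ha1 h, mul_zero]
    · have i1 : Integrable φr := hdr.continuous.integrable_of_hasCompactSupport hcr
      have i2 : Integrable φ := hg.1.continuous.integrable_of_hasCompactSupport hg.2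
      have hLr : ∫ x, |φr x| = L := by
        rw [hLdef, ← integral_scale (fun x => |φ x|) hr0]
        congr 1; ext x
        rw [hφr, abs_mul, abs_of_pos (by positivity)]
      refine lt_of_le_of_lt ?_ hrL
      calc ∫ x, |(1 - q)⁻¹ * (φr x - q * φ x)| ≤ ∫ x, (1 - q)⁻¹ * (|φr x| + q * |φ x|) := by
            apply integral_mono ((i1.sub (i2.const_mul q)).const_mul _).abs
              ((i1.abs.add (i2.abs.const_mul q)).const_mul _)
            intro x
            have e : |φr x - q * φ x| ≤ |φr x| + q * |φ x| := by
              refine (abs_sub _ _).trans ?_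
              rw [abs_mul q, abs_of_pos hq0]
            change |(1 - q)⁻¹ * (φr x - q * φ x)| ≤ (1 - q)⁻¹ * (|φr x| + q * |φ x|)
            rw [abs_mul, abs_of_pos (inv_pos.2 hq')]
            exact mul_le_mul_of_nonneg_left e (inv_pos.2 hq').le
        _ = _ := by
            rw [integral_const_mul, integral_add i1.abs (i2.abs.const_mul q), integral_const_mul,
              hLr]

/-- Existence of an admissible mollifier net `(ψ_ε)_{ε ∈ (0,1]}` on ℝⁿ:
(i) support in the closed unit ball, (ii) unit integral, (iii) moderate growth of all
partial derivatives, (iv) finitely many vanishing moments, (v) L¹-norm eventually ≤ 1 + ν. -/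
theorem admissible_mollifier_exists (n : ℕ) (hn : 1 ≤ n) :
    ∃ ψ : ℝ → EuclideanSpace ℝ (Fin n) → ℝ,
      (∀ ε ∈ Set.Ioc (0:ℝ) 1, ContDiff ℝ (⊤ : ℕ∞) (ψ ε) ∧ HasCompactSupport (ψ ε)) ∧
      (∀ ε ∈ Set.Ioc (0:ℝ) 1, tsupport (ψ ε) ⊆ Metric.closedBall 0 1) ∧
      (∀ ε ∈ Set.Ioc (0:ℝ) 1, ∫ x, ψ ε x = 1) ∧
      (∀ α : Fin n → ℕ, ∃ p : ℝ, ∃ C : ℝ, ∀ᶠ ε in 𝓝[>] (0:ℝ),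
        ∀ x, |mpderiv α (ψ ε) x| ≤ C * ε ^ (-p)) ∧
      (∀ j : ℕ, ∃ ε₀ ∈ Set.Ioc (0:ℝ) 1, ∀ α : Fin n → ℕ,
        1 ≤ (∑ i, α i) → (∑ i, α i) ≤ j → ∀ ε : ℝ, 0 < ε → ε ≤ ε₀ →
          ∫ x, (∏ i, x i ^ α i) * ψ ε x = 0) ∧
      (∀ ν : ℝ, 0 < ν → ∃ ε₀ ∈ Set.Ioc (0:ℝ) 1, ∀ ε : ℝ, 0 < ε → ε ≤ ε₀ →
        ∫ x, |ψ ε x| ≤ 1 + ν) := by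
  choose φ hg hs h1 hm hL using fun m : ℕ =>
    exists_pre n m (1 / ((m:ℝ) + 1)) (by positivity)
  choose B hB using fun m => (hg m).bdd_all m
  obtain ⟨M, hM⟩ := exists_slow B
  refine ⟨fun ε => φ (M ε), fun ε _ => hg _, fun ε _ => ?_, fun ε _ => h1 _, fun α => ?_,
    fun j => ?_, fun ν hν => ?_⟩
  · exact closure_minimal (hs _) Metric.isClosed_closedBall
  · obtain ⟨ε₀, he, H⟩ := hM (∑ i, α i)
    refine ⟨1, 1, ?_⟩
    filter_upwards [Ioc_mem_nhdsGT he.1] with ε hε x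
    obtain ⟨h2, h3⟩ := H ε hε.1 hε.2
    rw [Real.rpow_neg_one, one_mul]
    refine (hB _ α (fun i => ?_) x).trans h3
    exact (Finset.single_le_sum (fun _ _ => Nat.zero_le _) (Finset.mem_univ i)).trans h2
  · obtain ⟨ε₀, he, H⟩ := hM j
    exact ⟨ε₀, he, fun α ha1 ha2 ε h0 hle => hm _ α ha1 (ha2.trans (H ε h0 hle).1)⟩
  · obtain ⟨K, hK⟩ := exists_nat_one_div_lt hν
    obtain ⟨ε₀, he, H⟩ := hM K
    refine ⟨ε₀, he, fun ε h0 hle => ?_⟩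
    have h2 := hL (M ε)
    have h3 : 1 / ((M ε : ℝ) + 1) ≤ 1 / ((K:ℝ) + 1) :=
      Nat.one_div_le_one_div (H ε h0 hle).1
    simp only
    linarith
end

section
/- Let ψ ∈ C_c^∞(ℝ) with ∫ψ = 1 and set ρ_ε(x) := ε^{−1} ψ(x/ε), so ρ_ε''(x) = ε^{−3} ψ''(x/ε). Then for every continuous compactly supported f : ℝ → ℝ with f ≥ 0 and f(0) > 0, the net ∫_ℝ min(ρ_ε''(x), 0) f(x) dx tends to −∞ as ε → 0⁺. -/
open MeasureTheory Filter Topology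

/-- The integral of the negative part of the mollified second derivative of the delta
distribution diverges: for `ρ_ε''(x) = ε⁻³ ψ''(x/ε)` and any continuous compactly
supported `f ≥ 0` with `f(0) > 0`, `∫ min(ρ_ε'', 0) f → −∞` as `ε → 0⁺`. -/
theorem neg_part_of_delta_second_deriv_net_diverges
    (ψ : ℝ → ℝ) (hψ : ContDiff ℝ (⊤ : ℕ∞) ψ) (hψc : HasCompactSupport ψ)
    (hψ_int : ∫ t, ψ t = 1)
    (f : ℝ → ℝ) (hf : Continuous f) (hfc : HasCompactSupport f)
    (hf_nonneg : ∀ x, 0 ≤ f x) (hf0 : 0 < f 0) :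
    Tendsto
      (fun ε : ℝ => ∫ x, min ((ε ^ 3)⁻¹ * deriv (deriv ψ) (x / ε)) 0 * f x)
      (𝓝[>] (0:ℝ)) atBot := by
  have hψ' : ContDiff ℝ (⊤ : ℕ∞) (deriv ψ) := (contDiff_infty_iff_deriv.1 hψ).2
  have hψ'' : ContDiff ℝ (⊤ : ℕ∞) (deriv (deriv ψ)) := (contDiff_infty_iff_deriv.1 hψ').2
  have hz : ∀ u : ℝ → ℝ, HasCompactSupport u →
      ∀ x, ∃ a b, a ≤ x ∧ x ≤ b ∧ u a = 0 ∧ u b = 0 := by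
    intro u hu x
    obtain ⟨R, hR⟩ := hu.isBounded.subset_closedBall 0
    have key : ∀ y, R < |y| → u y = 0 := by
      intro y hy
      by_contra h
      have := hR (subset_tsupport u h)
      simp at this
      linarith
    refine ⟨-(|x| + |R| + 1), |x| + |R| + 1, ?_, ?_, key _ ?_, key _ ?_⟩
    · linarith [neg_abs_le x, abs_nonneg R]
    · linarith [le_abs_self x, abs_nonneg R]
    · rw [abs_neg, abs_of_pos (by positivity)]
      linarith [le_abs_self R, abs_nonneg x]
    · rw [abs_of_pos (by positivity)]
      linarith [le_abs_self R, abs_nonneg x]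
  have hneg : ∃ y, deriv (deriv ψ) y < 0 := by
    by_contra! hcon
    have hmono : Monotone (deriv ψ) :=
      monotone_of_deriv_nonneg (hψ'.differentiable (by simp)) hcon
    have hd0 : ∀ x, deriv ψ x = 0 := by
      intro x
      obtain ⟨a, b, ha, hb, ha0, hb0⟩ := hz _ hψc.deriv x
      have := hmono ha
      have := hmono hb
      linarith
    have hψ0 : ∀ x, ψ x = 0 := by
      intro x
      obtain ⟨a, b, ha, hb, ha0, hb0⟩ := hz _ hψc x
      rw [is_const_of_deriv_eq_zero (hψ.differentiable (by simp)) hd0 x a, ha0]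
    simp [hψ0] at hψ_int
  set g : ℝ → ℝ := fun y => min (deriv (deriv ψ) y) 0 with hg
  have hgc : Continuous g := hψ''.continuous.min continuous_const
  have hgs : HasCompactSupport g :=
    hψc.deriv.deriv.comp_left (g := fun t : ℝ => min t 0) (by simp)
  have hgI : 0 < ∫ y, -g y := by
    obtain ⟨y, hy⟩ := hneg
    refine hgc.neg.integral_pos_of_hasCompactSupport_nonneg_nonzero (x := y) hgs.neg
      (fun z => ?_) ?_
    · simp [hg]
    · simp only [hg, Pi.neg_apply, min_eq_left hy.le]
      linarith
  obtain ⟨C, hC⟩ := hf.bounded_above_of_compact_support hfc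
  have hlim : Tendsto (fun ε : ℝ => ∫ y, -g y * f (ε * y)) (𝓝[>] (0:ℝ))
      (𝓝 (∫ y, -g y * f 0)) := by
    refine tendsto_integral_filter_of_dominated_convergence (fun y => |g y| * C) ?_ ?_ ?_ ?_
    · exact Eventually.of_forall fun ε => (by fun_prop : Continuous _).aestronglyMeasurable
    · refine Eventually.of_forall fun ε => Eventually.of_forall fun y => ?_
      rw [norm_mul, norm_neg, Real.norm_eq_abs (g y)]
      exact mul_le_mul_of_nonneg_left (hC _) (abs_nonneg _)
    · exact ((hgc.integrable_of_hasCompactSupport hgs).abs).mul_const C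
    · refine Eventually.of_forall fun y => ?_
      have h : Continuous fun ε : ℝ => -g y * f (ε * y) := by fun_prop
      have := h.tendsto 0
      simp only [zero_mul] at this
      exact this.mono_left nhdsWithin_le_nhds
  rw [integral_mul_const] at hlim
  have hinv : Tendsto (fun ε : ℝ => (ε⁻¹) ^ 2) (𝓝[>] (0:ℝ)) atTop :=
    (tendsto_pow_atTop two_ne_zero).comp tendsto_inv_nhdsGT_zero
  have hmain := tendsto_neg_atTop_atBot.comp
    (hinv.atTop_mul_pos (mul_pos hgI hf0) hlim)
  refine hmain.congr' ?_
  filter_upwards [self_mem_nhdsWithin] with ε hε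
  have hε : 0 < ε := hε
  have e1 : ∀ x, min ((ε ^ 3)⁻¹ * deriv (deriv ψ) (x / ε)) 0 * f x
      = (fun y => (ε ^ 3)⁻¹ * (g y * f (ε * y))) (x / ε) := by
    intro x
    have h1 : min ((ε ^ 3)⁻¹ * deriv (deriv ψ) (x / ε)) 0 = (ε ^ 3)⁻¹ * g (x / ε) := by
      simp only [hg]
      rw [mul_min_of_nonneg _ _ (by positivity), mul_zero]
    simp only [h1, mul_div_cancel₀ x hε.ne', mul_assoc]
  simp_rw [e1]
  rw [Measure.integral_comp_div (fun y => (ε ^ 3)⁻¹ * (g y * f (ε * y))) ε,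
    integral_const_mul, abs_of_pos hε]
  simp only [Function.comp, neg_mul, integral_neg, smul_eq_mul]
  field_simp
end
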